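/- Decidability of finite-trace model checking: for a fixed finite set AP and trace length m, the relation 𝕋 ⊨ φ, where 𝕋 ⊆ Σ^m and φ is a closed formula of the extended logic (with second-order quantification and the fix construct), is decidable; i.e., there is an algorithm that, given 𝕋 and φ, decides whether 𝕋 ⊨ φ. -/

import Mathlib

/-!
With `p` and `m` fixed there are only finitely many traces, sets of traces and positions, so every
quantifier of the semantics ranges over a finite set and satisfaction can be computed by recursion
on the formula. The work lies in showing that this recursion, carried out on numerical codes, is
computable in the sense of Mathlib.

The evaluator `ev` takes a fuel parameter and a state: a code, two association lists for the trace
and set assignments, and a position. One step looks at a finite amount of information about the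
state (`feature`) and at the results of a fixed finite family of recursive calls (`callState`), and
combines them by a function between finite types (`Verdict`). Any function between finite types is
primitive recursive, and a recursion of this shape is computable by Kleene's recursion theorem
(`computable_fuelRec`).

For `fix`, a list of constraints is translated into the code of a formula without `fix`
(`constraintsCode`), using two additional connectives: membership of a trace in a set (tag 12) and
truth (tag 13). Evaluating that code for each of the finitely many `A ⊆ 𝕋` gives the least solution
computably (`solEval`); the full evaluator is `ev` with `solEval` as its treatment of `fix`, and
`ev_formula` states its correctness. Fuel exceeding the code is enough, since components of a pair
with positive tag are smaller than the pair.

Finally, `encodeTraceSet` is injective and has a finite domain, so the deciding function compares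
the first component of its input with the finitely many codes of sets `S` and runs the evaluator
for the matching one.
-/

namespace Hyper2LTLf

/-- A finite trace of length `m` over the finite set `AP` of atomic propositions:
each letter is a (finite) subset of `AP`. -/
abbrev Trace (AP : Type) (m : ℕ) : Type := Fin m → Finset AP

/-- Quantifier-free formulas (used as step formulas of fixpoint constraints). -/
inductive QF (AP : Type) : Type
  | atom : AP → ℕ → QF AP
  | neg  : QF AP → QF AP
  | conj : QF AP → QF AP → QF AP
  | nxt  : QF AP → QF AP
  | prv  : QF AP → QF AP
  | untl : QF AP → QF AP → QF AP
  | snce : QF AP → QF AP → QF AP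

/-- The distinguished second-order variable `sys`. -/
def sysVar : ℕ := 0

variable {AP : Type}

/-- Finite-trace satisfaction of quantifier-free formulas. -/
def SatQF {m : ℕ} : (ℕ → Trace AP m) → ℕ → QF AP → Prop
  | P, i, .atom a v => ∃ h : i < m, a ∈ P v ⟨i, h⟩
  | P, i, .neg φ => ¬ SatQF P i φ
  | P, i, .conj φ ψ => SatQF P i φ ∧ SatQF P i ψ
  | P, i, .nxt φ => i + 1 < m ∧ SatQF P (i + 1) φ
  | P, i, .prv φ => 0 < i ∧ SatQF P (i - 1) φ
  | P, i, .untl φ ψ =>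
      ∃ j, i ≤ j ∧ j < m ∧ SatQF P j ψ ∧ ∀ k, i ≤ k → k < j → SatQF P k φ
  | P, i, .snce φ ψ =>
      ∃ j, j ≤ i ∧ SatQF P j ψ ∧ ∀ k, j < k → k ≤ i → SatQF P k φ

/-- A fixpoint constraint `∀π₁∈X₁ … ∀πₙ∈Xₙ. φ_step → π ∈ X`. -/
structure Constraint (AP : Type) : Type where
  binders : List (ℕ × ℕ)
  step : QF AP
  target : ℕ

/-- Satisfaction of the universally quantified implication of a constraint. -/
def SatBinders {m : ℕ} (D : ℕ → Set (Trace AP m)) (i : ℕ) (X : ℕ) :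
    (ℕ → Trace AP m) → List (ℕ × ℕ) → QF AP → ℕ → Prop
  | P, [], step, tgt => SatQF P i step → P tgt ∈ D X
  | P, (v, Y) :: rest, step, tgt =>
      ∀ t ∈ D Y, SatBinders D i X (Function.update P v t) rest step tgt

/-- `Π, Δ, i ⊨_𝕋 ξ` for a fixpoint constraint `ξ` of the fix-variable `X`. -/
def SatConstraint {m : ℕ} (D : ℕ → Set (Trace AP m)) (i : ℕ) (X : ℕ)
    (P : ℕ → Trace AP m) (c : Constraint AP) : Prop :=
  SatBinders D i X P c.binders c.step c.target

/-- `sol(Π,Δ,i,X,ξ₁,…,ξ_k)`: the ⊆-least subset `A` of `𝕋` satisfying all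
constraints, as the intersection of all such subsets. -/
def solSet {m : ℕ} (T : Set (Trace AP m)) (P : ℕ → Trace AP m)
    (D : ℕ → Set (Trace AP m)) (i : ℕ) (X : ℕ) (cs : List (Constraint AP)) :
    Set (Trace AP m) :=
  ⋂₀ {A : Set (Trace AP m) | A ⊆ T ∧
        ∀ c ∈ cs, SatConstraint (Function.update D X A) i X P c}

/-- Syntax of the extended logic Hyper²LTL_f with the `fix` construct. -/
inductive FormulaX (AP : Type) : Type
  | atom  : AP → ℕ → FormulaX AP
  | neg   : FormulaX AP → FormulaX AP
  | conj  : FormulaX AP → FormulaX AP → FormulaX AP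
  | nxt   : FormulaX AP → FormulaX AP
  | prv   : FormulaX AP → FormulaX AP
  | untl  : FormulaX AP → FormulaX AP → FormulaX AP
  | snce  : FormulaX AP → FormulaX AP → FormulaX AP
  | exFO  : ℕ → ℕ → FormulaX AP → FormulaX AP
  | allFO : ℕ → ℕ → FormulaX AP → FormulaX AP
  | exSO  : ℕ → FormulaX AP → FormulaX AP
  | allSO : ℕ → FormulaX AP → FormulaX AP
  | fix   : ℕ → List (Constraint AP) → FormulaX AP → FormulaX AP

/-- Finite-trace satisfaction `Π, Δ, i ⊨_𝕋 φ` for the extended logic. -/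
def SatX {m : ℕ} (T : Set (Trace AP m)) :
    (ℕ → Trace AP m) → (ℕ → Set (Trace AP m)) → ℕ → FormulaX AP → Prop
  | P, _, i, .atom a v => ∃ h : i < m, a ∈ P v ⟨i, h⟩
  | P, D, i, .neg φ => ¬ SatX T P D i φ
  | P, D, i, .conj φ ψ => SatX T P D i φ ∧ SatX T P D i ψ
  | P, D, i, .nxt φ => i + 1 < m ∧ SatX T P D (i + 1) φ
  | P, D, i, .prv φ => 0 < i ∧ SatX T P D (i - 1) φ
  | P, D, i, .untl φ ψ =>
      ∃ j, i ≤ j ∧ j < m ∧ SatX T P D j ψ ∧ ∀ k, i ≤ k → k < j → SatX T P D k φ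
  | P, D, i, .snce φ ψ =>
      ∃ j, j ≤ i ∧ SatX T P D j ψ ∧ ∀ k, j < k → k ≤ i → SatX T P D k φ
  | P, D, i, .exFO v X φ => ∃ t ∈ D X, SatX T (Function.update P v t) D i φ
  | P, D, i, .allFO v X φ => ∀ t ∈ D X, SatX T (Function.update P v t) D i φ
  | P, D, i, .exSO X φ =>
      ∃ A : Set (Trace AP m), A ⊆ T ∧ SatX T P (Function.update D X A) i φ
  | P, D, i, .allSO X φ =>
      ∀ A : Set (Trace AP m), A ⊆ T → SatX T P (Function.update D X A) i φ
  | P, D, i, .fix X cs φ =>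
      SatX T P (Function.update D X (solSet T P D i X cs)) i φ

/-- Top-level satisfaction: `𝕋 ⊨ φ` iff `∅, [sys ↦ 𝕋], 0 ⊨_𝕋 φ`. -/
def ModelsX {m : ℕ} (T : Set (Trace AP m)) (φ : FormulaX AP) : Prop :=
  SatX T (fun _ _ => (∅ : Finset AP)) (fun X => if X = sysVar then T else ∅) 0 φ

/-- Trace variables occurring in a quantifier-free formula. -/
def qfTV : QF AP → Set ℕ
  | .atom _ v => {v}
  | .neg φ => qfTV φ
  | .nxt φ => qfTV φ
  | .prv φ => qfTV φ
  | .conj φ ψ => qfTV φ ∪ qfTV ψ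
  | .untl φ ψ => qfTV φ ∪ qfTV ψ
  | .snce φ ψ => qfTV φ ∪ qfTV ψ

/-- Free trace variables of a fixpoint constraint. -/
def freeTVC (c : Constraint AP) : Set ℕ :=
  (qfTV c.step ∪ {c.target}) \ {v | ∃ p ∈ c.binders, p.1 = v}

/-- Set variables occurring in a fixpoint constraint (its binders). -/
def svC (c : Constraint AP) : Set ℕ := {Y | ∃ p ∈ c.binders, p.2 = Y}

/-- Free trace variables. -/
def freeTVX : FormulaX AP → Set ℕ
  | .atom _ v => {v}
  | .neg φ => freeTVX φ
  | .nxt φ => freeTVX φ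
  | .prv φ => freeTVX φ
  | .conj φ ψ => freeTVX φ ∪ freeTVX ψ
  | .untl φ ψ => freeTVX φ ∪ freeTVX ψ
  | .snce φ ψ => freeTVX φ ∪ freeTVX ψ
  | .exFO v _ φ => freeTVX φ \ {v}
  | .allFO v _ φ => freeTVX φ \ {v}
  | .exSO _ φ => freeTVX φ
  | .allSO _ φ => freeTVX φ
  | .fix _ cs φ => freeTVX φ ∪ {v | ∃ c ∈ cs, v ∈ freeTVC c}

/-- Free set variables. -/
def freeSVX : FormulaX AP → Set ℕ
  | .atom _ _ => ∅
  | .neg φ => freeSVX φ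
  | .nxt φ => freeSVX φ
  | .prv φ => freeSVX φ
  | .conj φ ψ => freeSVX φ ∪ freeSVX ψ
  | .untl φ ψ => freeSVX φ ∪ freeSVX ψ
  | .snce φ ψ => freeSVX φ ∪ freeSVX ψ
  | .exFO _ X φ => insert X (freeSVX φ)
  | .allFO _ X φ => insert X (freeSVX φ)
  | .exSO X φ => freeSVX φ \ {X}
  | .allSO X φ => freeSVX φ \ {X}
  | .fix X cs φ => (freeSVX φ ∪ {Y | ∃ c ∈ cs, Y ∈ svC c}) \ {X}

/-- A formula is closed if it has no free trace variables and its only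
(possibly) free set variable is `sys`. -/
def ClosedX (φ : FormulaX AP) : Prop := freeTVX φ = ∅ ∧ freeSVX φ ⊆ {sysVar}

/-- An effective encoding of a trace over `AP = Fin p` as a natural number. -/
def encodeTrace {p m : ℕ} (t : Trace (Fin p) m) : ℕ :=
  Encodable.encode (List.ofFn fun j : Fin m => ∑ a ∈ t j, 2 ^ (a : ℕ))

/-- An effective encoding of a finite set of traces as a natural number. -/
def encodeTraceSet {p m : ℕ} (S : Finset (Trace (Fin p) m)) : ℕ :=
  Encodable.encode ((S.image encodeTrace).sort (· ≤ ·))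

/-- An effective encoding of quantifier-free formulas. -/
def encodeQF {p : ℕ} : QF (Fin p) → ℕ
  | .atom a v => Nat.pair 0 (Nat.pair (a : ℕ) v)
  | .neg φ => Nat.pair 1 (encodeQF φ)
  | .conj φ ψ => Nat.pair 2 (Nat.pair (encodeQF φ) (encodeQF ψ))
  | .nxt φ => Nat.pair 3 (encodeQF φ)
  | .prv φ => Nat.pair 4 (encodeQF φ)
  | .untl φ ψ => Nat.pair 5 (Nat.pair (encodeQF φ) (encodeQF ψ))
  | .snce φ ψ => Nat.pair 6 (Nat.pair (encodeQF φ) (encodeQF ψ))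

/-- An effective encoding of fixpoint constraints. -/
def encodeConstraint {p : ℕ} (c : Constraint (Fin p)) : ℕ :=
  Nat.pair (Encodable.encode (c.binders.map fun q => Nat.pair q.1 q.2))
    (Nat.pair (encodeQF c.step) c.target)

/-- An effective encoding of formulas of the extended logic. -/
def encodeFormulaX {p : ℕ} : FormulaX (Fin p) → ℕ
  | .atom a v => Nat.pair 0 (Nat.pair (a : ℕ) v)
  | .neg φ => Nat.pair 1 (encodeFormulaX φ)
  | .conj φ ψ => Nat.pair 2 (Nat.pair (encodeFormulaX φ) (encodeFormulaX ψ))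
  | .nxt φ => Nat.pair 3 (encodeFormulaX φ)
  | .prv φ => Nat.pair 4 (encodeFormulaX φ)
  | .untl φ ψ => Nat.pair 5 (Nat.pair (encodeFormulaX φ) (encodeFormulaX ψ))
  | .snce φ ψ => Nat.pair 6 (Nat.pair (encodeFormulaX φ) (encodeFormulaX ψ))
  | .exFO v X φ => Nat.pair 7 (Nat.pair v (Nat.pair X (encodeFormulaX φ)))
  | .allFO v X φ => Nat.pair 8 (Nat.pair v (Nat.pair X (encodeFormulaX φ)))
  | .exSO X φ => Nat.pair 9 (Nat.pair X (encodeFormulaX φ))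
  | .allSO X φ => Nat.pair 10 (Nat.pair X (encodeFormulaX φ))
  | .fix X cs φ =>
      Nat.pair 11 (Nat.pair X
        (Nat.pair (Encodable.encode (cs.map encodeConstraint)) (encodeFormulaX φ)))

section ModelChecker

open Encodable
open Nat.Partrec (Code)

/-! ### Computability of recursions with finite branching -/

/-- A function defined by recursion on fuel is computable when each step makes a fixed finite
number `k` of calls at one unit of fuel less and combines the results, together with a finite
amount of computable information `fe a`, by an arbitrary function `H`. The second argument changes
from call to call, so this is not an instance of primitive recursion; Kleene's recursion theorem
supplies a program that has access to its own code. -/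
theorem computable_fuelRec {α Fe : Type} [Primcodable α] [Primcodable Fe] [Finite Fe] {k : ℕ}
    (s : Fin k → α → α) (hs : ∀ i, Computable (s i)) (fe : α → Fe) (hfe : Computable fe)
    (H : Fe → List.Vector Bool k → Bool) (F : ℕ → α → Bool) (h0 : ∀ a, F 0 a = false)
    (hS : ∀ d a, F (d + 1) a = H (fe a) (List.Vector.ofFn fun i => F d (s i a))) :
    Computable fun x : ℕ × α => F x.1 x.2 := by
  let g : Code × (ℕ × α) →. Bool := fun y =>
    Nat.casesOn (motive := fun _ => Part Bool) y.2.1 (Part.some false) fun d =>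
      (List.Vector.mOfFn fun i => (Code.eval y.1 (encode (d, s i y.2.2))).map
        fun n => decide (n = 1)).map fun v => H (fe y.2.2) v
  have hg : Partrec g := by
    refine Partrec.nat_casesOn_right (f := fun y : Code × (ℕ × α) => y.2.1)
      (g := fun _ => false) (h := fun y d =>
      (List.Vector.mOfFn fun i => (Code.eval y.1 (encode (d, s i y.2.2))).map
        fun n => decide (n = 1)).map fun v => H (fe y.2.2) v)
      (Computable.fst.comp Computable.snd) (Computable.const false) ?_
    refine Partrec.map (Partrec.vector_mOfFn fun i => ?_) ?_
    · refine Partrec.map ?_ ?_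
      · refine Code.eval_part.comp (Computable.fst.comp Computable.fst) ?_
        exact Computable.encode.comp (Computable.pair Computable.snd
          ((hs i).comp (Computable.snd.comp (Computable.snd.comp Computable.fst))))
      · have h1 : Primrec fun n : ℕ => decide (n = 1) :=
          (Primrec.eq.comp Primrec.id (Primrec.const 1)).decide
        exact (h1.comp Primrec.snd).to_comp
    · have h1 : Primrec fun q : Fe × List.Vector Bool k => H q.1 q.2 :=
        Primrec.dom_finite _
      exact h1.to_comp.comp (Computable.pair
        (hfe.comp (Computable.snd.comp (Computable.snd.comp (Computable.fst.comp Computable.fst))))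
        Computable.snd)
  have hf : Partrec₂ fun (c : Code) (n : ℕ) =>
      (Part.ofOption (decode (α := ℕ × α) n)).bind fun x => (g (c, x)).map encode := by
    refine Partrec.bind (Computable.ofOption (Computable.decode.comp Computable.snd)) ?_
    refine Partrec.map (hg.comp (Computable.pair (Computable.fst.comp Computable.fst)
      Computable.snd)) ?_
    exact (Computable.encode.comp Computable.snd).to₂
  obtain ⟨c, hc⟩ := Code.fixed_point₂ hf
  -- The program `c` halts on every input, by induction on the fuel.
  have key : ∀ d a, Code.eval c (encode (d, a)) = Part.some (encode (F d a)) := by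
    intro d
    induction d with
    | zero => intro a; rw [hc]; simp [g, h0]
    | succ d ih =>
      intro a
      have hb : ∀ b : Bool, decide (encode b = 1) = b := by decide
      rw [hc]
      simp only [encodek, Part.coe_some, Part.bind_some, g, ih, Part.map_some, hb,
        Vector.mOfFn_part_some, hS]
  have h1 : Computable fun x : ℕ × α => encode (F x.1 x.2) := by
    refine Partrec.of_eq (Code.eval_part.comp (Computable.const c) Computable.encode) ?_
    rintro ⟨d, a⟩
    exact key d a
  exact Computable.encode_iff.1 h1

/-- Finitely many computable Boolean functions may be combined by an arbitrary function `H`. -/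
theorem computable_finCollect {α σ ι : Type} [Primcodable α] [Primcodable σ] [Finite ι]
    (g : ι → α → Bool) (hg : ∀ i, Computable (g i)) (H : (ι → Bool) → σ) :
    Computable fun a => H fun i => g i a := by
  let e := Finite.equivFin ι
  have h1 : Computable fun a => List.Vector.ofFn fun j => g (e.symm j) a :=
    Computable.vector_ofFn fun j => hg (e.symm j)
  have h2 : Primrec fun v : List.Vector Bool (Nat.card ι) => H fun i => v.get (e i) :=
    Primrec.dom_finite _
  refine (h2.to_comp.comp h1).of_eq fun a => ?_
  simp

/-! ### The evaluator -/

/-- The `Primcodable` structure on a finite type given by an arbitrary enumeration. -/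
@[reducible] noncomputable def finitePrimcodable (α : Type) [Finite α] : Primcodable α :=
  Primcodable.ofEquiv _ (Finite.equivFin α)

noncomputable instance tracePrimcodable (p m : ℕ) : Primcodable (Trace (Fin p) m) :=
  finitePrimcodable _

noncomputable instance traceSetPrimcodable (p m : ℕ) : Primcodable (Set (Trace (Fin p) m)) :=
  finitePrimcodable _

/-- The assignment represented by an association list, with default value `b`; earlier entries
take precedence. -/
def env {β : Type} (b : β) (l : List (ℕ × β)) : ℕ → β := fun v =>
  l.foldr (fun q r => if v = q.1 then q.2 else r) b

theorem env_cons {β : Type} (b : β) (v : ℕ) (x : β) (l : List (ℕ × β)) :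
    env b ((v, x) :: l) = Function.update (env b l) v x := by
  funext w
  by_cases h : w = v <;> simp [env, h]

theorem computable_env {α β : Type} [Primcodable α] [Primcodable β] (b : β)
    {l : α → List (ℕ × β)} {v : α → ℕ} (hl : Computable l) (hv : Computable v) :
    Computable fun a => env b (l a) (v a) := by
  have h : Primrec fun q : List (ℕ × β) × ℕ => env b q.1 q.2 := by
    refine Primrec.list_foldr (h := fun (q : List (ℕ × β) × ℕ) (x : (ℕ × β) × β) =>
      if q.2 = x.1.1 then x.1.2 else x.2) Primrec.fst (Primrec.const b) ?_
    refine Primrec.ite (Primrec.eq.comp (Primrec.snd.comp Primrec.fst)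
      (Primrec.fst.comp (Primrec.fst.comp Primrec.snd))) ?_ ?_
    · exact Primrec.snd.comp (Primrec.fst.comp Primrec.snd)
    · exact Primrec.snd.comp Primrec.snd
  exact h.to_comp.comp (hl.pair hv)

variable {p m : ℕ}

/-- States of the evaluator: a formula code, association lists for the trace assignment and the
set assignment, and a position. The position `m` is included so that the initial position `0`
exists also for `m = 0`. -/
abbrev State (p m : ℕ) : Type :=
  ℕ × List (ℕ × Trace (Fin p) m) × List (ℕ × Set (Trace (Fin p) m)) × Fin (m + 1)

/-- Labels of the recursive calls: which component of the current code to evaluate, at which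
position, and optionally a trace or a set of traces to bind to the variable named in the code. -/
abbrev Call (p m : ℕ) : Type :=
  Fin 4 × Fin (m + 1) × Option (Trace (Fin p) m) × Option (Set (Trace (Fin p) m))

/-- The component of a formula code selected by `s`: the operand of a unary connective (`0`), the
left and right operands of a binary connective (`1` and `2`, the latter being also the body of a
set quantifier), and the body of a trace quantifier or of `fix` (`3`). -/
def childCode (s : Fin 4) (n : ℕ) : ℕ :=
  match s with
  | 0 => n.unpair.2
  | 1 => n.unpair.2.unpair.1
  | 2 => n.unpair.2.unpair.2
  | 3 => n.unpair.2.unpair.2.unpair.2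

/-- The state at which the call `c` made from the state `a` is evaluated. -/
def callState (c : Call p m) (a : State p m) : State p m :=
  (childCode c.1 a.1,
    c.2.2.1.elim a.2.1 (fun t => (a.1.unpair.2.unpair.1, t) :: a.2.1),
    c.2.2.2.elim a.2.2.1 (fun A => (a.1.unpair.2.unpair.1, A) :: a.2.2.1),
    c.2.1)

/-- The finite information about a state on which an evaluation step depends: the tag of the code,
the proposition of an atom, the trace and the two sets named at the possible places in the code,
the solution set of a `fix`, and the position. -/
abbrev Feature (p m : ℕ) : Type :=
  Option (Fin 14) × Option (Fin p) × Trace (Fin p) m × Set (Trace (Fin p) m) ×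
    Set (Trace (Fin p) m) × Set (Trace (Fin p) m) × Fin (m + 1)

/-- The feature of a state. The parameter `sol` says which set a `fix` binds. For codes of other
shapes than those for which a component is intended, that component is a meaningless value. -/
def feature (sol : State p m → Set (Trace (Fin p) m)) (a : State p m) : Feature p m :=
  (decode a.1.unpair.1, decode a.1.unpair.2.unpair.1,
    env (fun _ => ∅) a.2.1 a.1.unpair.2.unpair.2,
    env ∅ a.2.2.1 a.1.unpair.2.unpair.1,
    env ∅ a.2.2.1 a.1.unpair.2.unpair.2.unpair.1,
    sol a, a.2.2.2)

/-- The semantic clause for each tag, as a statement about the feature `f` of the state and the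
results `r` of the recursive calls. Tags `0` to `11` are those of `encodeFormulaX`; tag `12` is
membership of a trace in a set and tag `13` is truth. -/
def Verdict (T : Set (Trace (Fin p) m)) (f : Feature p m) (r : Call p m → Bool) : Prop :=
  match f with
  | (tag, letter, t, A, B, fixSet, i) =>
    match tag.map Fin.val with
    | some 0 => ∃ a ∈ letter, ∃ h : (i : ℕ) < m, a ∈ t ⟨i, h⟩
    | some 1 => ¬ r (0, i, none, none)
    | some 2 => r (1, i, none, none) ∧ r (2, i, none, none)
    | some 3 => ∃ j : Fin (m + 1), (j : ℕ) = i + 1 ∧ (j : ℕ) < m ∧ r (0, j, none, none)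
    | some 4 => ∃ j : Fin (m + 1), (i : ℕ) = j + 1 ∧ r (0, j, none, none)
    | some 5 => ∃ j : Fin (m + 1), i ≤ j ∧ (j : ℕ) < m ∧ r (2, j, none, none) ∧
        ∀ k : Fin (m + 1), i ≤ k → k < j → r (1, k, none, none)
    | some 6 => ∃ j : Fin (m + 1), j ≤ i ∧ r (2, j, none, none) ∧
        ∀ k : Fin (m + 1), j < k → k ≤ i → r (1, k, none, none)
    | some 7 => ∃ u ∈ B, r (3, i, some u, none)
    | some 8 => ∀ u ∈ B, r (3, i, some u, none)
    | some 9 => ∃ C, C ⊆ T ∧ r (2, i, none, some C)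
    | some 10 => ∀ C, C ⊆ T → r (2, i, none, some C)
    | some 11 => r (3, i, none, some fixSet)
    | some 12 => t ∈ A
    | _ => True

open Classical in
/-- Evaluation of formula codes with bounded recursion depth; without fuel the result is
`false`. -/
noncomputable def ev (sol : State p m → Set (Trace (Fin p) m)) (T : Set (Trace (Fin p) m)) :
    ℕ → State p m → Bool
  | 0, _ => false
  | d + 1, a => decide (Verdict T (feature sol a) fun c => ev sol T d (callState c a))

theorem primrec_childCode (s : Fin 4) : Primrec (childCode s) := by
  have h2 : Primrec fun n : ℕ => n.unpair.2 := Primrec.snd.comp Primrec.unpair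
  have h1 : Primrec fun n : ℕ => n.unpair.1 := Primrec.fst.comp Primrec.unpair
  fin_cases s
  · exact h2
  · exact h1.comp h2
  · exact h2.comp h2
  · exact h2.comp (h2.comp h2)

theorem computable_callState (c : Call p m) : Computable (callState c) := by
  obtain ⟨s, j, ot, os⟩ := c
  have hv : Primrec fun a : State p m => a.1.unpair.2.unpair.1 :=
    (primrec_childCode 1).comp Primrec.fst
  have hP : Primrec fun a : State p m => a.2.1 := Primrec.fst.comp Primrec.snd
  have hD : Primrec fun a : State p m => a.2.2.1 :=
    Primrec.fst.comp (Primrec.snd.comp Primrec.snd)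
  refine Primrec.to_comp (Primrec.pair ((primrec_childCode s).comp Primrec.fst)
    (Primrec.pair ?_ (Primrec.pair ?_ (Primrec.const j))))
  · cases ot with
    | none => exact hP
    | some t => exact Primrec.list_cons.comp (hv.pair (Primrec.const t)) hP
  · cases os with
    | none => exact hD
    | some A => exact Primrec.list_cons.comp (hv.pair (Primrec.const A)) hD

theorem computable_feature {sol : State p m → Set (Trace (Fin p) m)} (hsol : Computable sol) :
    Computable (feature sol) := by
  have h2 : Computable fun n : ℕ => n.unpair.2 := Computable.snd.comp Computable.unpair
  have h1 : Computable fun n : ℕ => n.unpair.1 := Computable.fst.comp Computable.unpair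
  have hn : Computable fun a : State p m => a.1 := Computable.fst
  have hP : Computable fun a : State p m => a.2.1 := Computable.fst.comp Computable.snd
  have hD : Computable fun a : State p m => a.2.2.1 :=
    Computable.fst.comp (Computable.snd.comp Computable.snd)
  refine (Computable.decode.comp (h1.comp hn)).pair <|
    (Computable.decode.comp (h1.comp (h2.comp hn))).pair <|
    (computable_env _ hP (h2.comp (h2.comp hn))).pair <|
    (computable_env _ hD (h1.comp (h2.comp hn))).pair <|
    (computable_env _ hD (h1.comp (h2.comp (h2.comp hn)))).pair <|
    hsol.pair (Computable.snd.comp (Computable.snd.comp Computable.snd))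

theorem computable_ev {sol : State p m → Set (Trace (Fin p) m)} (hsol : Computable sol)
    (T : Set (Trace (Fin p) m)) : Computable fun x : ℕ × State p m => ev sol T x.1 x.2 := by
  classical
  let e := Finite.equivFin (Call p m)
  refine computable_fuelRec (fun j => callState (e.symm j)) (fun j => computable_callState _)
    (feature sol) (computable_feature hsol)
    (fun f v => decide (Verdict T f fun c => v.get (e c))) (ev sol T) (fun _ => rfl) ?_
  intro d a
  simp [ev]

section Unfold

variable {sol : State p m → Set (Trace (Fin p) m)} {T : Set (Trace (Fin p) m)} {d : ℕ}
  {P : List (ℕ × Trace (Fin p) m)} {D : List (ℕ × Set (Trace (Fin p) m))} {i : Fin (m + 1)}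

theorem decode_tag {k : ℕ} (n : ℕ) (h : n < k) : (decode n : Option (Fin k)) = some ⟨n, h⟩ :=
  encodek (⟨n, h⟩ : Fin k)

theorem ev_succ {a : State p m} : ev sol T (d + 1) a ↔
    Verdict T (feature sol a) fun c => ev sol T d (callState c a) := by
  simp [ev]

theorem ev_atom {a v : ℕ} (ha : a < p) : ev sol T (d + 1) (Nat.pair 0 (Nat.pair a v), P, D, i) ↔
    ∃ h : (i : ℕ) < m, (⟨a, ha⟩ : Fin p) ∈ env (fun _ => ∅) P v ⟨i, h⟩ := by
  simp [ev_succ, Verdict, feature, decode_tag, ha]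

theorem ev_neg {c : ℕ} : ev sol T (d + 1) (Nat.pair 1 c, P, D, i) ↔
    ¬ ev sol T d (c, P, D, i) := by
  simp [ev_succ, Verdict, feature, decode_tag, callState, childCode]

theorem ev_conj {b c : ℕ} : ev sol T (d + 1) (Nat.pair 2 (Nat.pair b c), P, D, i) ↔
    ev sol T d (b, P, D, i) ∧ ev sol T d (c, P, D, i) := by
  simp [ev_succ, Verdict, feature, decode_tag, callState, childCode]

theorem ev_nxt {c : ℕ} : ev sol T (d + 1) (Nat.pair 3 c, P, D, i) ↔
    ∃ j : Fin (m + 1), (j : ℕ) = i + 1 ∧ (j : ℕ) < m ∧ ev sol T d (c, P, D, j) := by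
  simp [ev_succ, Verdict, feature, decode_tag, callState, childCode]

theorem ev_prv {c : ℕ} : ev sol T (d + 1) (Nat.pair 4 c, P, D, i) ↔
    ∃ j : Fin (m + 1), (i : ℕ) = j + 1 ∧ ev sol T d (c, P, D, j) := by
  simp [ev_succ, Verdict, feature, decode_tag, callState, childCode]

theorem ev_untl {b c : ℕ} : ev sol T (d + 1) (Nat.pair 5 (Nat.pair b c), P, D, i) ↔
    ∃ j : Fin (m + 1), i ≤ j ∧ (j : ℕ) < m ∧ ev sol T d (c, P, D, j) ∧
      ∀ k : Fin (m + 1), i ≤ k → k < j → ev sol T d (b, P, D, k) := by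
  simp [ev_succ, Verdict, feature, decode_tag, callState, childCode]

theorem ev_snce {b c : ℕ} : ev sol T (d + 1) (Nat.pair 6 (Nat.pair b c), P, D, i) ↔
    ∃ j : Fin (m + 1), j ≤ i ∧ ev sol T d (c, P, D, j) ∧
      ∀ k : Fin (m + 1), j < k → k ≤ i → ev sol T d (b, P, D, k) := by
  simp [ev_succ, Verdict, feature, decode_tag, callState, childCode]

theorem ev_exFO {v X c : ℕ} :
    ev sol T (d + 1) (Nat.pair 7 (Nat.pair v (Nat.pair X c)), P, D, i) ↔
      ∃ t ∈ env ∅ D X, ev sol T d (c, (v, t) :: P, D, i) := by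
  simp [ev_succ, Verdict, feature, decode_tag, callState, childCode]

theorem ev_allFO {v X c : ℕ} :
    ev sol T (d + 1) (Nat.pair 8 (Nat.pair v (Nat.pair X c)), P, D, i) ↔
      ∀ t ∈ env ∅ D X, ev sol T d (c, (v, t) :: P, D, i) := by
  simp [ev_succ, Verdict, feature, decode_tag, callState, childCode]

theorem ev_exSO {X c : ℕ} : ev sol T (d + 1) (Nat.pair 9 (Nat.pair X c), P, D, i) ↔
    ∃ A, A ⊆ T ∧ ev sol T d (c, P, (X, A) :: D, i) := by
  simp [ev_succ, Verdict, feature, decode_tag, callState, childCode]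

theorem ev_allSO {X c : ℕ} : ev sol T (d + 1) (Nat.pair 10 (Nat.pair X c), P, D, i) ↔
    ∀ A, A ⊆ T → ev sol T d (c, P, (X, A) :: D, i) := by
  simp [ev_succ, Verdict, feature, decode_tag, callState, childCode]

theorem ev_fix {X cs c : ℕ} :
    ev sol T (d + 1) (Nat.pair 11 (Nat.pair X (Nat.pair cs c)), P, D, i) ↔
      ev sol T d (c, P,
        (X, sol (Nat.pair 11 (Nat.pair X (Nat.pair cs c)), P, D, i)) :: D, i) := by
  simp [ev_succ, Verdict, feature, decode_tag, callState, childCode]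

theorem ev_mem {X v : ℕ} : ev sol T (d + 1) (Nat.pair 12 (Nat.pair X v), P, D, i) ↔
    env (fun _ => ∅) P v ∈ env ∅ D X := by
  simp [ev_succ, Verdict, feature, decode_tag]

theorem ev_true {c : ℕ} : ev sol T (d + 1) (Nat.pair 13 c, P, D, i) := by
  simp [ev_succ, Verdict, feature, decode_tag]

end Unfold

/-! ### Correctness on quantifier-free formulas -/

theorem lt_natPair {k n : ℕ} (hk : 0 < k) : n < Nat.pair k n :=
  lt_of_lt_of_le (by omega) (Nat.add_le_pair k n)

/-! The temporal clauses quantify over `Fin (m + 1)` in the evaluator and over `ℕ` in the semantics. -/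

section Temporal

variable {A B : Fin (m + 1) → Prop} {A' B' : ℕ → Prop} {i : Fin (m + 1)}

theorem nxt_iff (hA : ∀ j, A j ↔ A' j) :
    (∃ j : Fin (m + 1), (j : ℕ) = i + 1 ∧ (j : ℕ) < m ∧ A j) ↔
      (i : ℕ) + 1 < m ∧ A' (i + 1) := by
  constructor
  · rintro ⟨j, h, hm, ha⟩
    rw [hA, h] at ha
    exact ⟨h ▸ hm, ha⟩
  · rintro ⟨h, ha⟩
    exact ⟨⟨i + 1, by omega⟩, rfl, h, (hA _).2 ha⟩

theorem prv_iff (hA : ∀ j, A j ↔ A' j) :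
    (∃ j : Fin (m + 1), (i : ℕ) = j + 1 ∧ A j) ↔ 0 < (i : ℕ) ∧ A' (i - 1) := by
  constructor
  · rintro ⟨j, h, ha⟩
    rw [hA] at ha
    have : (i : ℕ) - 1 = j := by omega
    exact ⟨by omega, this ▸ ha⟩
  · rintro ⟨h, ha⟩
    exact ⟨⟨i - 1, by omega⟩, by simp; omega, (hA _).2 ha⟩

theorem untl_iff (hA : ∀ j, A j ↔ A' j) (hB : ∀ j, B j ↔ B' j) :
    (∃ j : Fin (m + 1), i ≤ j ∧ (j : ℕ) < m ∧ A j ∧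
      ∀ k : Fin (m + 1), i ≤ k → k < j → B k) ↔
    ∃ j : ℕ, (i : ℕ) ≤ j ∧ j < m ∧ A' j ∧ ∀ k : ℕ, (i : ℕ) ≤ k → k < j → B' k := by
  constructor
  · rintro ⟨j, hij, hm, ha, hb⟩
    exact ⟨j, hij, hm, (hA j).1 ha, fun k h1 h2 => (hB ⟨k, by omega⟩).1 (hb _ h1 h2)⟩
  · rintro ⟨j, hij, hm, ha, hb⟩
    exact ⟨⟨j, by omega⟩, hij, hm, (hA _).2 ha, fun k h1 h2 => (hB k).2 (hb _ h1 h2)⟩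

theorem snce_iff (hA : ∀ j, A j ↔ A' j) (hB : ∀ j, B j ↔ B' j) :
    (∃ j : Fin (m + 1), j ≤ i ∧ A j ∧ ∀ k : Fin (m + 1), j < k → k ≤ i → B k) ↔
    ∃ j : ℕ, j ≤ (i : ℕ) ∧ A' j ∧ ∀ k : ℕ, j < k → k ≤ (i : ℕ) → B' k := by
  constructor
  · rintro ⟨j, hij, ha, hb⟩
    exact ⟨j, hij, (hA j).1 ha, fun k h1 h2 => (hB ⟨k, by omega⟩).1 (hb _ h1 h2)⟩
  · rintro ⟨j, hij, ha, hb⟩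
    exact ⟨⟨j, by omega⟩, hij, (hA _).2 ha, fun k h1 h2 => (hB k).2 (hb _ h1 h2)⟩

end Temporal

/-- Quantifier-free formulas have the same codes as the corresponding general formulas, and `ev`
is correct on them whatever `sol` is. -/
theorem ev_qf (sol : State p m → Set (Trace (Fin p) m)) (T : Set (Trace (Fin p) m))
    (P : List (ℕ × Trace (Fin p) m)) (D : List (ℕ × Set (Trace (Fin p) m))) (q : QF (Fin p)) :
    ∀ (d : ℕ) (i : Fin (m + 1)), encodeQF q < d →
      (ev sol T d (encodeQF q, P, D, i) ↔ SatQF (env (fun _ => ∅) P) i q) := by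
  induction q with
  | atom a v =>
    rintro (_ | d) i hd
    · omega
    · exact ev_atom a.2
  | neg φ ih =>
    rintro (_ | d) i hd
    · omega
    · rw [encodeQF] at hd ⊢
      have h1 := lt_natPair (k := 1) (n := encodeQF φ) (by omega)
      rw [ev_neg, ih d i (by omega), SatQF]
  | nxt φ ih =>
    rintro (_ | d) i hd
    · omega
    · rw [encodeQF] at hd ⊢
      have h1 := lt_natPair (k := 3) (n := encodeQF φ) (by omega)
      rw [ev_nxt, SatQF]
      exact nxt_iff (A' := fun j => SatQF (env (fun _ => ∅) P) j φ) fun j => ih d j (by omega)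
  | prv φ ih =>
    rintro (_ | d) i hd
    · omega
    · rw [encodeQF] at hd ⊢
      have h1 := lt_natPair (k := 4) (n := encodeQF φ) (by omega)
      rw [ev_prv, SatQF]
      exact prv_iff (A' := fun j => SatQF (env (fun _ => ∅) P) j φ) fun j => ih d j (by omega)
  | conj φ ψ ih₁ ih₂ =>
    rintro (_ | d) i hd
    · omega
    · rw [encodeQF] at hd ⊢
      have h1 := lt_natPair (k := 2) (n := Nat.pair (encodeQF φ) (encodeQF ψ)) (by omega)
      have h2 := Nat.left_le_pair (encodeQF φ) (encodeQF ψ)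
      have h3 := Nat.right_le_pair (encodeQF φ) (encodeQF ψ)
      rw [ev_conj, ih₁ d i (by omega), ih₂ d i (by omega), SatQF]
  | untl φ ψ ih₁ ih₂ =>
    rintro (_ | d) i hd
    · omega
    · rw [encodeQF] at hd ⊢
      have h1 := lt_natPair (k := 5) (n := Nat.pair (encodeQF φ) (encodeQF ψ)) (by omega)
      have h2 := Nat.left_le_pair (encodeQF φ) (encodeQF ψ)
      have h3 := Nat.right_le_pair (encodeQF φ) (encodeQF ψ)
      rw [ev_untl, SatQF]
      exact untl_iff (fun j => ih₂ d j (by omega)) fun j => ih₁ d j (by omega)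
  | snce φ ψ ih₁ ih₂ =>
    rintro (_ | d) i hd
    · omega
    · rw [encodeQF] at hd ⊢
      have h1 := lt_natPair (k := 6) (n := Nat.pair (encodeQF φ) (encodeQF ψ)) (by omega)
      have h2 := Nat.left_le_pair (encodeQF φ) (encodeQF ψ)
      have h3 := Nat.right_le_pair (encodeQF φ) (encodeQF ψ)
      rw [ev_snce, SatQF]
      exact snce_iff (fun j => ih₂ d j (by omega)) fun j => ih₁ d j (by omega)

/-! ### Constraints as formula codes -/

/-- The code of `∀ π₁ ∈ X₁ … ∀ πₙ ∈ Xₙ. ¬ (step ∧ ¬ tgt ∈ X)`, where `l` lists the paired codes of the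
binders. -/
def bindersCode (X step tgt : ℕ) (l : List ℕ) : ℕ :=
  l.foldr (fun b c => Nat.pair 8 (Nat.pair b.unpair.1 (Nat.pair b.unpair.2 c)))
    (Nat.pair 1 (Nat.pair 2 (Nat.pair step (Nat.pair 1 (Nat.pair 12 (Nat.pair X tgt))))))

/-- The formula code of the constraint for the variable `X` whose `encodeConstraint` is `k`. -/
def constraintCode (X k : ℕ) : ℕ :=
  bindersCode X k.unpair.2.unpair.1 k.unpair.2.unpair.2
    ((decode k.unpair.1 : Option (List ℕ)).getD [])

/-- The formula code of the conjunction of the constraints for `X` in the list encoded by `k`. -/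
def constraintsCode (X k : ℕ) : ℕ :=
  ((decode k : Option (List ℕ)).getD []).foldr
    (fun j c => Nat.pair 2 (Nat.pair (constraintCode X j) c)) (Nat.pair 13 0)

theorem primrec_constraintCode : Primrec₂ constraintCode := by
  have h2 : Primrec fun n : ℕ => n.unpair.2 := Primrec.snd.comp Primrec.unpair
  have h1 : Primrec fun n : ℕ => n.unpair.1 := Primrec.fst.comp Primrec.unpair
  have hp {α : Type} [Primcodable α] {f g : α → ℕ} (hf : Primrec f) (hg : Primrec g) :
      Primrec fun a => Nat.pair (f a) (g a) := Primrec₂.natPair.comp hf hg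
  refine Primrec.list_foldr (α := ℕ × ℕ)
    (h := fun (_ : ℕ × ℕ) (q : ℕ × ℕ) =>
      Nat.pair 8 (Nat.pair q.1.unpair.1 (Nat.pair q.1.unpair.2 q.2)))
    (Primrec.option_getD.comp
      (Primrec.decode.comp (h1.comp Primrec.snd)) (Primrec.const [])) ?_ ?_
  · exact hp (.const 1) (hp (.const 2) (hp (h1.comp (h2.comp .snd)) (hp (.const 1)
      (hp (.const 12) (hp .fst (h2.comp (h2.comp .snd)))))))
  · have hb : Primrec fun q : (ℕ × ℕ) × (ℕ × ℕ) => q.2.1 := Primrec.fst.comp .snd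
    exact hp (.const 8) (hp (h1.comp hb) (hp (h2.comp hb) (Primrec.snd.comp .snd)))

theorem primrec_constraintsCode : Primrec₂ constraintsCode := by
  have hp {α : Type} [Primcodable α] {f g : α → ℕ} (hf : Primrec f) (hg : Primrec g) :
      Primrec fun a => Nat.pair (f a) (g a) := Primrec₂.natPair.comp hf hg
  refine Primrec.list_foldr (α := ℕ × ℕ)
    (h := fun (a : ℕ × ℕ) (q : ℕ × ℕ) => Nat.pair 2 (Nat.pair (constraintCode a.1 q.1) q.2))
    (Primrec.option_getD.comp (Primrec.decode.comp Primrec.snd) (Primrec.const []))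
    (Primrec.const _) ?_
  have hb : Primrec fun q : (ℕ × ℕ) × (ℕ × ℕ) => q.2.1 := Primrec.fst.comp .snd
  exact hp (.const 2) (hp (primrec_constraintCode.comp (Primrec.fst.comp .fst) hb)
    (Primrec.snd.comp .snd))

/-- Fuel exceeding the matrix of `bindersCode` suffices to unfold its four connectives and then to
evaluate the step formula. -/
theorem implicationCode_fuel {s n d : ℕ}
    (h : Nat.pair 1 (Nat.pair 2 (Nat.pair s (Nat.pair 1 (Nat.pair 12 n)))) < d) :
    ∃ e, d = e + 4 ∧ s < e + 2 := by
  have h5 : n < Nat.pair 12 n := lt_natPair (by decide)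
  generalize Nat.pair 12 n = n₁ at h h5
  have h4 : n₁ < Nat.pair 1 n₁ := lt_natPair (by decide)
  generalize Nat.pair 1 n₁ = n₂ at h h4
  have h3 := Nat.left_le_pair s n₂
  have h3' := Nat.right_le_pair s n₂
  generalize Nat.pair s n₂ = n₃ at h h3 h3'
  have h2 : n₃ < Nat.pair 2 n₃ := lt_natPair (by decide)
  generalize Nat.pair 2 n₃ = n₄ at h h2
  have h1 : n₄ < Nat.pair 1 n₄ := lt_natPair (by decide)
  exact ⟨d - 4, by omega, by omega⟩

theorem ev_binders (sol : State p m → Set (Trace (Fin p) m)) (T : Set (Trace (Fin p) m))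
    (D : List (ℕ × Set (Trace (Fin p) m))) (i : Fin (m + 1)) (X tgt : ℕ) (q : QF (Fin p))
    (l : List (ℕ × ℕ)) :
    ∀ (d : ℕ) (P : List (ℕ × Trace (Fin p) m)),
      bindersCode X (encodeQF q) tgt (l.map fun b => Nat.pair b.1 b.2) < d →
      (ev sol T d (bindersCode X (encodeQF q) tgt (l.map fun b => Nat.pair b.1 b.2), P, D, i) ↔
        SatBinders (env ∅ D) i X (env (fun _ => ∅) P) l q tgt) := by
  induction l with
  | nil =>
    intro d P hd
    simp only [bindersCode, List.map_nil, List.foldr_nil] at hd ⊢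
    obtain ⟨e, rfl, he⟩ := implicationCode_fuel hd
    rw [ev_neg, ev_conj, ev_neg, ev_mem, ev_qf sol T P D q _ i he, SatBinders, not_and, not_not]
  | cons b l ih =>
    rintro (_ | d) P hd
    · exact absurd hd (Nat.not_lt_zero _)
    obtain ⟨v, Y⟩ := b
    simp only [bindersCode, List.map_cons, List.foldr_cons, Nat.unpair_pair] at hd ⊢ ih
    rw [ev_allFO, SatBinders]
    generalize List.foldr _ _ _ = c at hd ih ⊢
    have h1 := lt_natPair (k := 8) (n := Nat.pair v (Nat.pair Y c)) (by omega)
    have h2 := Nat.right_le_pair v (Nat.pair Y c)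
    have h3 := Nat.right_le_pair Y c
    refine forall₂_congr fun t _ => ?_
    rw [ih d _ (by omega), env_cons]

theorem ev_constraints (sol : State p m → Set (Trace (Fin p) m)) (T : Set (Trace (Fin p) m))
    (P : List (ℕ × Trace (Fin p) m)) (D : List (ℕ × Set (Trace (Fin p) m))) (i : Fin (m + 1))
    (X : ℕ) (cs : List (Constraint (Fin p))) :
    ∀ d, constraintsCode X (encode (cs.map encodeConstraint)) < d →
      (ev sol T d (constraintsCode X (encode (cs.map encodeConstraint)), P, D, i) ↔
        ∀ c ∈ cs, SatConstraint (env ∅ D) i X (env (fun _ => ∅) P) c) := by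
  simp only [constraintsCode, encodek, Option.getD_some]
  induction cs with
  | nil =>
    rintro (_ | d) hd
    · omega
    · simpa using ev_true
  | cons c cs ih =>
    rintro (_ | d) hd
    · omega
    simp only [List.map_cons, List.foldr_cons] at hd ⊢
    generalize List.foldr _ _ _ = n at hd ih ⊢
    have h1 := lt_natPair (k := 2)
      (n := Nat.pair (constraintCode X (encodeConstraint c)) n) (by omega)
    have h2 := Nat.left_le_pair (constraintCode X (encodeConstraint c)) n
    have h3 := Nat.right_le_pair (constraintCode X (encodeConstraint c)) n
    have h4 : constraintCode X (encodeConstraint c) = bindersCode X (encodeQF c.step) c.target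
        (c.binders.map fun b => Nat.pair b.1 b.2) := by
      simp [constraintCode, encodeConstraint]
    rw [ev_conj, ih d (by omega), h4, ev_binders sol T D i X c.target c.step c.binders d P
      (by omega), List.forall_mem_cons, SatConstraint]

/-! ### Correctness of the evaluator -/

/-- The least solution of the constraints of the `fix` code in the state `a`, obtained by testing
every `A ⊆ T`. The codes tested contain no `fix`, so `ev` is used here with a dummy first
argument. -/
noncomputable def solEval (T : Set (Trace (Fin p) m)) (a : State p m) : Set (Trace (Fin p) m) :=
  {t | ∀ A : Set (Trace (Fin p) m), A ⊆ T →
    ev (fun _ => ∅) T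
      (constraintsCode a.1.unpair.2.unpair.1 a.1.unpair.2.unpair.2.unpair.1 + 1)
      (constraintsCode a.1.unpair.2.unpair.1 a.1.unpair.2.unpair.2.unpair.1, a.2.1,
        (a.1.unpair.2.unpair.1, A) :: a.2.2.1, a.2.2.2) → t ∈ A}

theorem computable_solEval (T : Set (Trace (Fin p) m)) : Computable (solEval T) := by
  have h2 : Primrec fun n : ℕ => n.unpair.2 := Primrec.snd.comp Primrec.unpair
  have h1 : Primrec fun n : ℕ => n.unpair.1 := Primrec.fst.comp Primrec.unpair
  have hX : Primrec fun a : State p m => a.1.unpair.2.unpair.1 := h1.comp (h2.comp .fst)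
  have hcs : Primrec fun a : State p m => a.1.unpair.2.unpair.2.unpair.1 :=
    h1.comp (h2.comp (h2.comp .fst))
  have hc := primrec_constraintsCode.comp hX hcs
  have hP : Primrec fun a : State p m => a.2.1 := Primrec.fst.comp .snd
  have hD : Primrec fun a : State p m => a.2.2.1 := Primrec.fst.comp (Primrec.snd.comp .snd)
  have hi : Primrec fun a : State p m => a.2.2.2 := Primrec.snd.comp (Primrec.snd.comp .snd)
  refine computable_finCollect
    (fun (A : Set (Trace (Fin p) m)) (a : State p m) => ev (fun _ => ∅) T
      (constraintsCode a.1.unpair.2.unpair.1 a.1.unpair.2.unpair.2.unpair.1 + 1)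
      (constraintsCode a.1.unpair.2.unpair.1 a.1.unpair.2.unpair.2.unpair.1, a.2.1,
        (a.1.unpair.2.unpair.1, A) :: a.2.2.1, a.2.2.2)) (fun A => ?_)
    (fun r => {t | ∀ A : Set (Trace (Fin p) m), A ⊆ T → r A → t ∈ A})
  have h := (Primrec.succ.comp hc).pair (hc.pair (hP.pair
    ((Primrec.list_cons.comp (hX.pair (Primrec.const (α := State p m) A)) hD).pair hi)))
  exact (computable_ev (Computable.const ∅) T).comp h.to_comp

theorem solEval_eq (T : Set (Trace (Fin p) m)) (P : List (ℕ × Trace (Fin p) m))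
    (D : List (ℕ × Set (Trace (Fin p) m))) (i : Fin (m + 1)) (X n : ℕ)
    (cs : List (Constraint (Fin p))) :
    solEval T (Nat.pair 11 (Nat.pair X (Nat.pair (encode (cs.map encodeConstraint)) n)), P, D, i) =
      solSet T (env (fun _ => ∅) P) (env ∅ D) i X cs := by
  ext t
  simp only [solEval, Nat.unpair_pair, Set.mem_ofPred_eq, solSet, Set.mem_sInter, and_imp]
  refine forall₂_congr fun A _ => ?_
  rw [ev_constraints _ T P _ i X cs _ (Nat.lt_succ_self _), env_cons]

theorem ev_formula (T : Set (Trace (Fin p) m)) (φ : FormulaX (Fin p)) :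
    ∀ (d : ℕ) (P : List (ℕ × Trace (Fin p) m)) (D : List (ℕ × Set (Trace (Fin p) m)))
      (i : Fin (m + 1)), encodeFormulaX φ < d →
      (ev (solEval T) T d (encodeFormulaX φ, P, D, i) ↔
        SatX T (env (fun _ => ∅) P) (env ∅ D) i φ) := by
  induction φ with
  | atom a v =>
    rintro (_ | d) P D i hd
    · omega
    · exact ev_atom a.2
  | neg φ ih =>
    rintro (_ | d) P D i hd
    · omega
    · rw [encodeFormulaX] at hd ⊢
      have h1 := lt_natPair (k := 1) (n := encodeFormulaX φ) (by omega)
      rw [ev_neg, ih d P D i (by omega), SatX]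
  | nxt φ ih =>
    rintro (_ | d) P D i hd
    · omega
    · rw [encodeFormulaX] at hd ⊢
      have h1 := lt_natPair (k := 3) (n := encodeFormulaX φ) (by omega)
      rw [ev_nxt, SatX]
      exact nxt_iff (A' := fun j => SatX T (env (fun _ => ∅) P) (env ∅ D) j φ) fun j =>
        ih d P D j (by omega)
  | prv φ ih =>
    rintro (_ | d) P D i hd
    · omega
    · rw [encodeFormulaX] at hd ⊢
      have h1 := lt_natPair (k := 4) (n := encodeFormulaX φ) (by omega)
      rw [ev_prv, SatX]
      exact prv_iff (A' := fun j => SatX T (env (fun _ => ∅) P) (env ∅ D) j φ) fun j =>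
        ih d P D j (by omega)
  | conj φ ψ ih₁ ih₂ =>
    rintro (_ | d) P D i hd
    · omega
    · rw [encodeFormulaX] at hd ⊢
      have h1 := lt_natPair (k := 2) (n := Nat.pair (encodeFormulaX φ) (encodeFormulaX ψ))
        (by omega)
      have h2 := Nat.left_le_pair (encodeFormulaX φ) (encodeFormulaX ψ)
      have h3 := Nat.right_le_pair (encodeFormulaX φ) (encodeFormulaX ψ)
      rw [ev_conj, ih₁ d P D i (by omega), ih₂ d P D i (by omega), SatX]
  | untl φ ψ ih₁ ih₂ =>
    rintro (_ | d) P D i hd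
    · omega
    · rw [encodeFormulaX] at hd ⊢
      have h1 := lt_natPair (k := 5) (n := Nat.pair (encodeFormulaX φ) (encodeFormulaX ψ))
        (by omega)
      have h2 := Nat.left_le_pair (encodeFormulaX φ) (encodeFormulaX ψ)
      have h3 := Nat.right_le_pair (encodeFormulaX φ) (encodeFormulaX ψ)
      rw [ev_untl, SatX]
      exact untl_iff (fun j => ih₂ d P D j (by omega)) fun j => ih₁ d P D j (by omega)
  | snce φ ψ ih₁ ih₂ =>
    rintro (_ | d) P D i hd
    · omega
    · rw [encodeFormulaX] at hd ⊢
      have h1 := lt_natPair (k := 6) (n := Nat.pair (encodeFormulaX φ) (encodeFormulaX ψ))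
        (by omega)
      have h2 := Nat.left_le_pair (encodeFormulaX φ) (encodeFormulaX ψ)
      have h3 := Nat.right_le_pair (encodeFormulaX φ) (encodeFormulaX ψ)
      rw [ev_snce, SatX]
      exact snce_iff (fun j => ih₂ d P D j (by omega)) fun j => ih₁ d P D j (by omega)
  | exFO v X φ ih =>
    rintro (_ | d) P D i hd
    · omega
    · rw [encodeFormulaX] at hd ⊢
      have h1 := lt_natPair (k := 7) (n := Nat.pair v (Nat.pair X (encodeFormulaX φ))) (by omega)
      have h2 := Nat.right_le_pair v (Nat.pair X (encodeFormulaX φ))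
      have h3 := Nat.right_le_pair X (encodeFormulaX φ)
      rw [ev_exFO, SatX]
      refine exists_congr fun t => and_congr_right fun _ => ?_
      rw [ih d _ D i (by omega), env_cons]
  | allFO v X φ ih =>
    rintro (_ | d) P D i hd
    · omega
    · rw [encodeFormulaX] at hd ⊢
      have h1 := lt_natPair (k := 8) (n := Nat.pair v (Nat.pair X (encodeFormulaX φ))) (by omega)
      have h2 := Nat.right_le_pair v (Nat.pair X (encodeFormulaX φ))
      have h3 := Nat.right_le_pair X (encodeFormulaX φ)
      rw [ev_allFO, SatX]
      refine forall₂_congr fun t _ => ?_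
      rw [ih d _ D i (by omega), env_cons]
  | exSO X φ ih =>
    rintro (_ | d) P D i hd
    · omega
    · rw [encodeFormulaX] at hd ⊢
      have h1 := lt_natPair (k := 9) (n := Nat.pair X (encodeFormulaX φ)) (by omega)
      have h2 := Nat.right_le_pair X (encodeFormulaX φ)
      rw [ev_exSO, SatX]
      refine exists_congr fun A => and_congr_right fun _ => ?_
      rw [ih d P _ i (by omega), env_cons]
  | allSO X φ ih =>
    rintro (_ | d) P D i hd
    · omega
    · rw [encodeFormulaX] at hd ⊢
      have h1 := lt_natPair (k := 10) (n := Nat.pair X (encodeFormulaX φ)) (by omega)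
      have h2 := Nat.right_le_pair X (encodeFormulaX φ)
      rw [ev_allSO, SatX]
      refine forall₂_congr fun A _ => ?_
      rw [ih d P _ i (by omega), env_cons]
  | fix X cs φ ih =>
    rintro (_ | d) P D i hd
    · omega
    · rw [encodeFormulaX] at hd ⊢
      have h1 := lt_natPair (k := 11) (n := Nat.pair X (Nat.pair
        (encode (cs.map encodeConstraint)) (encodeFormulaX φ))) (by omega)
      have h2 := Nat.right_le_pair X (Nat.pair
        (encode (cs.map encodeConstraint)) (encodeFormulaX φ))
      have h3 := Nat.right_le_pair (encode (cs.map encodeConstraint)) (encodeFormulaX φ)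
      rw [ev_fix, SatX, ih d P _ i (by omega), env_cons, solEval_eq]

/-! ### The decision procedure -/

theorem encodeTrace_injective : Function.Injective (encodeTrace (p := p) (m := m)) := by
  intro s t h
  have h1 := List.ofFn_injective (encode_injective h)
  funext j
  have h2 := congrFun h1 j
  have h3 : ∀ u : Finset (Fin p),
      ∑ a ∈ u, 2 ^ (a : ℕ) = ∑ n ∈ u.map Fin.valEmbedding, 2 ^ n := by
    intro u
    rw [Finset.sum_map]
    rfl
  simp only [h3] at h2
  exact Finset.map_injective _ (Finset.geomSum_injective le_rfl h2)

theorem encodeTraceSet_injective : Function.Injective (encodeTraceSet (p := p) (m := m)) := by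
  intro S S' h
  have h1 := congrArg List.toFinset (encode_injective h)
  rw [Finset.sort_toFinset, Finset.sort_toFinset] at h1
  exact Finset.image_injective encodeTrace_injective h1

theorem computable_decider (T : Set (Trace (Fin p) m)) :
    Computable fun n : ℕ => ev (solEval T) T (n + 1) (n, [], [(sysVar, T)], 0) := by
  have h := Primrec.succ.pair (Primrec.id.pair
    ((Primrec.const ([] : List (ℕ × Trace (Fin p) m))).pair
      ((Primrec.const [(sysVar, T)]).pair (Primrec.const (0 : Fin (m + 1))))))
  exact (computable_ev (computable_solEval T) T).comp h.to_comp

theorem decider_iff (T : Set (Trace (Fin p) m)) (φ : FormulaX (Fin p)) :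
    ev (solEval T) T (encodeFormulaX φ + 1) (encodeFormulaX φ, [], [(sysVar, T)], 0) ↔
      ModelsX T φ := by
  rw [ev_formula T φ _ _ _ _ (Nat.lt_succ_self _), ModelsX]
  rfl

end ModelChecker

/-- decidability of finite-trace model checking for the extended
logic: for a fixed finite set of atomic propositions `AP = Fin p` and fixed trace
length `m`, there is an algorithm (a computable function on encodings) deciding,
given a finite set of traces `𝕋 ⊆ Σ^m` and a closed formula `φ`, whether `𝕋 ⊨ φ`. -/
theorem modelChecking_decidable (p m : ℕ) :
    ∃ f : ℕ → Bool, Computable f ∧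
      ∀ (S : Finset (Trace (Fin p) m)) (φ : FormulaX (Fin p)), ClosedX φ →
        (f (Nat.pair (encodeTraceSet S) (encodeFormulaX φ)) = true ↔
          ModelsX (↑S : Set (Trace (Fin p) m)) φ) := by
  classical
  -- `g S` is the decision procedure for the single set `S`, and rejects inputs about other sets.
  let g : Finset (Trace (Fin p) m) → ℕ → Bool := fun S n =>
    decide (n.unpair.1 = encodeTraceSet S) && ev (solEval (↑S : Set (Trace (Fin p) m))) ↑S
      (n.unpair.2 + 1) (n.unpair.2, [], [(sysVar, (↑S : Set (Trace (Fin p) m)))], 0)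
  have hg : ∀ S, Computable (g S) := by
    intro S
    have h1 : Primrec fun n : ℕ => decide (n.unpair.1 = encodeTraceSet S) :=
      (Primrec.eq.comp (Primrec.fst.comp Primrec.unpair) (Primrec.const _)).decide
    have h2 : Computable fun n : ℕ => n.unpair.2 := Computable.snd.comp Computable.unpair
    exact Primrec.and.to_comp.comp h1.to_comp ((computable_decider _).comp h2)
  refine ⟨fun n => decide (∃ S, g S n), computable_finCollect g hg fun r => decide (∃ S, r S), ?_⟩
  intro S φ _
  rw [decide_eq_true_iff, ← decider_iff]
  simp only [g, Nat.unpair_pair, Bool.and_eq_true, decide_eq_true_iff]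
  constructor
  · rintro ⟨S', h, h'⟩
    obtain rfl := encodeTraceSet_injective h
    exact h'
  · exact fun h => ⟨S, rfl, h⟩

end Hyper2LTLf
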